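/- A₂₁ divides f₂₁(x₁) − f₂₁^σ(x₂) in K[x₁,x₂], and moreover A₂₁(x₂,x₁) = −A₂₁^σ(x₁,x₂). -/

import Mathlib

/-!
The field `ℚ(α)` is `ℚ(√-7)` and `σ` restricts to its nontrivial automorphism `α ↦ 1 - α`.
Since `A₂₁` is monic in `x₁`, divisibility can be decided by long division of
`f₂₁(x₁) - f₂₁^σ(x₂)` by `A₂₁` as polynomials in `x₁` over `ℤ[α][x₂]`. The division leaves no
remainder, and its quotient `quot₀ + α quot₁` has `quot₀, quot₁ ∈ ℤ[x₁, x₂]`.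

To check the result, split every polynomial along the basis `1, α` of `ℤ[α]`. If the cofactors
are `A₀ + α A₁` and `Q₀ + α Q₁`, then `α² = α - 2` turns their product into
`(A₀ Q₀ - 2 A₁ Q₁) + α (A₀ Q₁ + A₁ Q₀ + A₁ Q₁)`, so divisibility reduces to the two polynomial
identities `fact_one` and `fact_alpha` with integer coefficients. They hold in every commutative
ring, and are specialised to `K[x₁, x₂]` with `a = C α`. The statement about swapping the variables
is a comparison of coefficients, using `σ α = 1 - α`.
-/

open Polynomial in
/-- The polynomial `f₂₁` of Cassou-Noguès and Couveignes (degree 21 pair). -/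
noncomputable def f₂₁ {K : Type*} [Field K] (α : K) : Polynomial K :=
  X ^ 21
    + C (42*α + 42) * X ^ 19
    + C (84*α + 84) * X ^ 18
    + C (2331*α - 861) * X ^ 17
    + C (8820*α - 2604) * X ^ 16
    + C (46816*α - 64568) * X ^ 15
    + C (227136*α - 306320) * X ^ 14
    + C (417060*α - 1450470) * X ^ 13
    + C (1249248*α - 6783504) * X ^ 12
    + C (-1650124*α - 18355540) * X ^ 11
    + C (-25341624*α - 54772872) * X ^ 10
    + C (-99408078*α - 104516426) * X ^ 9
    + C (-414193752*α - 32069128) * X ^ 8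
    + C (-1090995696*α + 266146344) * X ^ 7
    + C (-2279293856*α + 2006258800) * X ^ 6
    + C (-4341402044*α + 5721876405) * X ^ 5
    + C (-4332603072*α + 10737937392) * X ^ 4
    + C (-2459323342*α + 18242100282) * X ^ 3
    + C (1708403396*α + 16523766868) * X ^ 2
    + C (8637088971*α + 9205492695) * X
    + C (4696767684*α)

open MvPolynomial in
/-- The factor `A₂₁(x₁,x₂)` of `f₂₁(x₁) − f₂₁^σ(x₂)`. -/
noncomputable def A₂₁ {K : Type*} [Field K] (α : K) : MvPolynomial (Fin 2) K :=
  X 0 ^ 5 + C (α + 1) * X 0 ^ 4 * X 1 + C (2*α) * X 0 ^ 3 * X 1 ^ 2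
    + C (10*α + 18) * X 0 ^ 3 + C (2*α - 2) * X 0 ^ 2 * X 1 ^ 3
    + C (32*α - 8) * X 0 ^ 2 * X 1 + C (20*α + 4) * X 0 ^ 2
    + C (α - 2) * X 0 * X 1 ^ 4 + C (32*α - 24) * X 0 * X 1 ^ 2
    + C (32*α - 16) * X 0 * X 1 + C (107*α + 55) * X 0 - X 1 ^ 5
    + C (10*α - 28) * X 1 ^ 3 + C (20*α - 24) * X 1 ^ 2
    + C (107*α - 162) * X 1 + C (136*α - 68)

section Certificate

variable {R : Type*} [CommRing R]

/-- The part of `f₂₁` free of `α`: `f₂₁ = fac₀ + α fac₁` with integer coefficients. -/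
def fac₀ (x : R) : R :=
    x ^ 21 + 42 * x ^ 19 + 84 * x ^ 18 - 861 * x ^ 17 - 2604 * x ^ 16 - 64568 * x ^ 15
    - 306320 * x ^ 14 - 1450470 * x ^ 13 - 6783504 * x ^ 12 - 18355540 * x ^ 11
    - 54772872 * x ^ 10 - 104516426 * x ^ 9 - 32069128 * x ^ 8 + 266146344 * x ^ 7
    + 2006258800 * x ^ 6 + 5721876405 * x ^ 5 + 10737937392 * x ^ 4 + 18242100282 * x ^ 3
    + 16523766868 * x ^ 2 + 9205492695 * x

/-- The coefficient of `α` in `f₂₁ = fac₀ + α fac₁`. -/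
def fac₁ (x : R) : R :=
    42 * x ^ 19 + 84 * x ^ 18 + 2331 * x ^ 17 + 8820 * x ^ 16 + 46816 * x ^ 15 + 227136 * x ^ 14
    + 417060 * x ^ 13 + 1249248 * x ^ 12 - 1650124 * x ^ 11 - 25341624 * x ^ 10
    - 99408078 * x ^ 9 - 414193752 * x ^ 8 - 1090995696 * x ^ 7 - 2279293856 * x ^ 6
    - 4341402044 * x ^ 5 - 4332603072 * x ^ 4 - 2459323342 * x ^ 3 + 1708403396 * x ^ 2
    + 8637088971 * x + 4696767684

/-- The part of `A₂₁` free of `α`: `A₂₁ = div₀ + α div₁` with integer coefficients. -/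
def div₀ (x y : R) : R :=
    x ^ 5 + x ^ 4 * y - 2 * x ^ 2 * y ^ 3 - 2 * x * y ^ 4 - y ^ 5 + 18 * x ^ 3 - 8 * x ^ 2 * y
    - 24 * x * y ^ 2 - 28 * y ^ 3 + 4 * x ^ 2 - 16 * x * y - 24 * y ^ 2 + 55 * x - 162 * y - 68

/-- The coefficient of `α` in `A₂₁ = div₀ + α div₁`. -/
def div₁ (x y : R) : R :=
    x ^ 4 * y + 2 * x ^ 3 * y ^ 2 + 2 * x ^ 2 * y ^ 3 + x * y ^ 4 + 10 * x ^ 3 + 32 * x ^ 2 * y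
    + 32 * x * y ^ 2 + 10 * y ^ 3 + 20 * x ^ 2 + 32 * x * y + 20 * y ^ 2 + 107 * x + 107 * y
    + 136

set_option maxHeartbeats 2000000 in
/-- The part free of `α` of the quotient of `f₂₁(x) - f₂₁^σ(y)` by `A₂₁(x, y)`. -/
def quot₀ (x y : R) : R :=
    x ^ 16 - x ^ 15 * y - x ^ 14 * y ^ 2 + x ^ 13 * y ^ 3 + x ^ 12 * y ^ 4 - 2 * x ^ 11 * y ^ 5
    + x ^ 10 * y ^ 6 + 2 * x ^ 9 * y ^ 7 - 3 * x ^ 8 * y ^ 8 + 2 * x ^ 6 * y ^ 10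
    - x ^ 5 * y ^ 11 - x ^ 4 * y ^ 12 + 2 * x ^ 3 * y ^ 13 - 2 * x * y ^ 15 + y ^ 16
    + 24 * x ^ 14 + 46 * x ^ 13 * y - 92 * x ^ 12 * y ^ 2 - 38 * x ^ 11 * y ^ 3
    + 152 * x ^ 10 * y ^ 4 - 80 * x ^ 9 * y ^ 5 - 100 * x ^ 8 * y ^ 6 + 156 * x ^ 7 * y ^ 7
    - 8 * x ^ 6 * y ^ 8 - 128 * x ^ 5 * y ^ 9 + 88 * x ^ 4 * y ^ 10 + 54 * x ^ 3 * y ^ 11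
    - 80 * x ^ 2 * y ^ 12 - 36 * x * y ^ 13 + 56 * y ^ 14 + 80 * x ^ 13 + 28 * x ^ 12 * y
    - 176 * x ^ 11 * y ^ 2 + 28 * x ^ 10 * y ^ 3 + 224 * x ^ 9 * y ^ 4 - 320 * x ^ 8 * y ^ 5
    + 88 * x ^ 7 * y ^ 6 + 248 * x ^ 6 * y ^ 7 - 240 * x ^ 5 * y ^ 8 + 168 * x ^ 3 * y ^ 10
    - 76 * x ^ 2 * y ^ 11 - 168 * x * y ^ 12 + 144 * y ^ 13 - 708 * x ^ 12 + 2659 * x ^ 11 * y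
    - 786 * x ^ 10 * y ^ 2 - 3075 * x ^ 9 * y ^ 3 + 2336 * x ^ 8 * y ^ 4 + 1952 * x ^ 7 * y ^ 5
    - 3266 * x ^ 6 * y ^ 6 - 398 * x ^ 5 * y ^ 7 + 3572 * x ^ 4 * y ^ 8 - 1598 * x ^ 3 * y ^ 9
    - 2140 * x ^ 2 * y ^ 10 + 1653 * x * y ^ 11 + 380 * y ^ 12 - 1512 * x ^ 11
    + 10140 * x ^ 10 * y - 7688 * x ^ 9 * y ^ 2 - 7732 * x ^ 8 * y ^ 3 + 14976 * x ^ 7 * y ^ 4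
    - 4384 * x ^ 6 * y ^ 5 - 11128 * x ^ 5 * y ^ 6 + 12408 * x ^ 4 * y ^ 7 + 424 * x ^ 3 * y ^ 8
    - 9504 * x ^ 2 * y ^ 9 + 3048 * x * y ^ 10 + 3332 * y ^ 11 - 22296 * x ^ 10
    + 31452 * x ^ 9 * y + 16828 * x ^ 8 * y ^ 2 - 31952 * x ^ 7 * y ^ 3 - 12512 * x ^ 6 * y ^ 4
    + 28840 * x ^ 5 * y ^ 5 + 13612 * x ^ 4 * y ^ 6 - 39736 * x ^ 3 * y ^ 7
    - 2744 * x ^ 2 * y ^ 8 + 34896 * x * y ^ 9 - 9752 * y ^ 10 - 116240 * x ^ 9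
    + 201832 * x ^ 8 * y + 35128 * x ^ 7 * y ^ 2 - 235504 * x ^ 6 * y ^ 3
    + 67488 * x ^ 5 * y ^ 4 + 213072 * x ^ 4 * y ^ 5 - 189928 * x ^ 3 * y ^ 6
    - 101824 * x ^ 2 * y ^ 7 + 206016 * x * y ^ 8 - 45936 * y ^ 9 - 303834 * x ^ 8
    + 271889 * x ^ 7 * y + 115949 * x ^ 6 * y ^ 2 - 122154 * x ^ 5 * y ^ 3
    + 54272 * x ^ 4 * y ^ 4 - 180016 * x ^ 3 * y ^ 5 + 11917 * x ^ 2 * y ^ 6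
    + 364970 * x * y ^ 7 - 216794 * y ^ 8 - 1326592 * x ^ 7 + 403048 * x ^ 6 * y
    + 1842296 * x ^ 5 * y ^ 2 - 630480 * x ^ 4 * y ^ 3 - 1949776 * x ^ 3 * y ^ 4
    + 1110192 * x ^ 2 * y ^ 5 + 1651816 * x * y ^ 6 - 1339232 * y ^ 7 - 2743160 * x ^ 6
    + 1327198 * x ^ 5 * y + 2048384 * x ^ 4 * y ^ 2 - 2547348 * x ^ 3 * y ^ 3
    + 187560 * x ^ 2 * y ^ 4 + 3455436 * x * y ^ 5 - 2924776 * y ^ 6 - 3115984 * x ^ 5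
    - 7168756 * x ^ 4 * y + 4011808 * x ^ 3 * y ^ 2 + 8573576 * x ^ 2 * y ^ 3
    - 1104488 * x * y ^ 4 - 7622352 * y ^ 5 - 7415300 * x ^ 4 - 13177205 * x ^ 3 * y
    + 19704964 * x ^ 2 * y ^ 2 + 4766284 * x * y ^ 3 - 18033604 * y ^ 4 + 10870992 * x ^ 3
    - 14790164 * x ^ 2 * y - 13850504 * x * y ^ 2 - 7366904 * y ^ 3 + 37826520 * x ^ 2
    - 71100456 * x * y - 7015208 * y ^ 2 + 21834000 * x - 3501840 * y + 69070113

set_option maxHeartbeats 2000000 in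
/-- The coefficient of `α` in the quotient of `f₂₁(x) - f₂₁^σ(y)` by `A₂₁(x, y)`. -/
def quot₁ (x y : R) : R :=
    -x ^ 15 * y + x ^ 14 * y ^ 2 + x ^ 13 * y ^ 3 - 2 * x ^ 12 * y ^ 4 + x ^ 11 * y ^ 5
    + x ^ 10 * y ^ 6 - 2 * x ^ 9 * y ^ 7 + 2 * x ^ 7 * y ^ 9 - x ^ 6 * y ^ 10 - x ^ 5 * y ^ 11
    + 2 * x ^ 4 * y ^ 12 - x ^ 3 * y ^ 13 - x ^ 2 * y ^ 14 + x * y ^ 15 + 32 * x ^ 14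
    - 82 * x ^ 13 * y + 12 * x ^ 12 * y ^ 2 + 92 * x ^ 11 * y ^ 3 - 64 * x ^ 10 * y ^ 4
    - 48 * x ^ 9 * y ^ 5 + 92 * x ^ 8 * y ^ 6 - 92 * x ^ 6 * y ^ 8 + 48 * x ^ 5 * y ^ 9
    + 64 * x ^ 4 * y ^ 10 - 92 * x ^ 3 * y ^ 11 - 12 * x ^ 2 * y ^ 12 + 82 * x * y ^ 13
    - 32 * y ^ 14 + 64 * x ^ 13 - 196 * x ^ 12 * y + 100 * x ^ 11 * y ^ 2 + 140 * x ^ 10 * y ^ 3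
    - 224 * x ^ 9 * y ^ 4 + 80 * x ^ 8 * y ^ 5 + 160 * x ^ 7 * y ^ 6 - 160 * x ^ 6 * y ^ 7
    - 80 * x ^ 5 * y ^ 8 + 224 * x ^ 4 * y ^ 9 - 140 * x ^ 3 * y ^ 10 - 100 * x ^ 2 * y ^ 11
    + 196 * x * y ^ 12 - 64 * y ^ 13 + 1088 * x ^ 12 - 1006 * x ^ 11 * y - 1354 * x ^ 10 * y ^ 2
    + 1477 * x ^ 9 * y ^ 3 + 1236 * x ^ 8 * y ^ 4 - 2350 * x ^ 7 * y ^ 5 + 2350 * x ^ 5 * y ^ 7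
    - 1236 * x ^ 4 * y ^ 8 - 1477 * x ^ 3 * y ^ 9 + 1354 * x ^ 2 * y ^ 10 + 1006 * x * y ^ 11
    - 1088 * y ^ 12 + 4844 * x ^ 11 - 7092 * x ^ 10 * y - 1816 * x ^ 9 * y ^ 2
    + 8156 * x ^ 8 * y ^ 3 - 2568 * x ^ 7 * y ^ 4 - 6744 * x ^ 6 * y ^ 5 + 6744 * x ^ 5 * y ^ 6
    + 2568 * x ^ 4 * y ^ 7 - 8156 * x ^ 3 * y ^ 8 + 1816 * x ^ 2 * y ^ 9 + 7092 * x * y ^ 10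
    - 4844 * y ^ 11 + 12544 * x ^ 10 + 3444 * x ^ 9 * y - 19572 * x ^ 8 * y ^ 2
    - 7784 * x ^ 7 * y ^ 3 + 26124 * x ^ 6 * y ^ 4 - 26124 * x ^ 4 * y ^ 6
    + 7784 * x ^ 3 * y ^ 7 + 19572 * x ^ 2 * y ^ 8 - 3444 * x * y ^ 9 - 12544 * y ^ 10
    + 70304 * x ^ 9 + 4184 * x ^ 8 * y - 136952 * x ^ 7 * y ^ 2 + 45576 * x ^ 6 * y ^ 3
    + 145584 * x ^ 5 * y ^ 4 - 145584 * x ^ 4 * y ^ 5 - 45576 * x ^ 3 * y ^ 6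
    + 136952 * x ^ 2 * y ^ 7 - 4184 * x * y ^ 8 - 70304 * y ^ 9 + 87040 * x ^ 8
    + 93081 * x ^ 7 * y - 104032 * x ^ 6 * y ^ 2 - 57862 * x ^ 5 * y ^ 3 + 57862 * x ^ 3 * y ^ 5
    + 104032 * x ^ 2 * y ^ 6 - 93081 * x * y ^ 7 - 87040 * y ^ 8 - 12640 * x ^ 7
    + 1248768 * x ^ 6 * y - 732104 * x ^ 5 * y ^ 2 - 1319296 * x ^ 4 * y ^ 3
    + 1319296 * x ^ 3 * y ^ 4 + 732104 * x ^ 2 * y ^ 5 - 1248768 * x * y ^ 6 + 12640 * y ^ 7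
    - 181616 * x ^ 6 + 2128238 * x ^ 5 * y - 1860824 * x ^ 4 * y ^ 2 + 1860824 * x ^ 2 * y ^ 4
    - 2128238 * x * y ^ 5 + 181616 * y ^ 6 - 4506368 * x ^ 5 + 6064268 * x ^ 4 * y
    + 4561768 * x ^ 3 * y ^ 2 - 4561768 * x ^ 2 * y ^ 3 - 6064268 * x * y ^ 4 + 4506368 * y ^ 5
    - 10618304 * x ^ 4 + 17943489 * x ^ 3 * y - 17943489 * x * y ^ 3 + 10618304 * y ^ 4
    - 18237896 * x ^ 3 + 939660 * x ^ 2 * y - 939660 * x * y ^ 2 + 18237896 * y ^ 3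
    - 44841728 * x ^ 2 + 44841728 * y ^ 2 - 25335840 * x + 25335840 * y

set_option maxHeartbeats 4000000 in
/-- The `1`-component of `f₂₁(x) - f₂₁^σ(y) = A₂₁(x, y) (quot₀ + α quot₁)` over `ℤ[α]`, where
`f₂₁^σ = (fac₀ + fac₁) - α fac₁`. -/
lemma fact_one (x y : R) :
    fac₀ x - (fac₀ y + fac₁ y) = div₀ x y * quot₀ x y - 2 * (div₁ x y * quot₁ x y) := by
  simp only [fac₀, fac₁, div₀, div₁, quot₀, quot₁]
  ring

set_option maxHeartbeats 4000000 in
/-- The `α`-component of `f₂₁(x) - f₂₁^σ(y) = A₂₁(x, y) (quot₀ + α quot₁)` over `ℤ[α]`. -/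
lemma fact_alpha (x y : R) :
    fac₁ x + fac₁ y
      = div₀ x y * quot₁ x y + div₁ x y * quot₀ x y + div₁ x y * quot₁ x y := by
  simp only [fac₁, div₀, div₁, quot₀, quot₁]
  ring

lemma fact_combined (a x y : R) (ha : a ^ 2 - a + 2 = 0) :
    (fac₀ x + a * fac₁ x) - (fac₀ y + (1 - a) * fac₁ y)
      = (div₀ x y + a * div₁ x y) * (quot₀ x y + a * quot₁ x y) := by
  linear_combination fact_one x y + a * fact_alpha x y - div₁ x y * quot₁ x y * ha

end Certificate

lemma aeval_f₂₁ {K R : Type*} [Field K] [CommRing R] [Algebra K R] (α : K) (x : R) :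
    Polynomial.aeval x (f₂₁ α) = fac₀ x + algebraMap K R α * fac₁ x := by
  simp only [f₂₁, fac₀, fac₁, map_add, map_sub, map_mul, map_pow, map_neg, map_ofNat,
    Polynomial.aeval_X, Polynomial.aeval_C]
  ring

lemma map_f₂₁ {K : Type*} [Field K] (α : K) (σ : K →+* K) :
    (f₂₁ α).map σ = f₂₁ (σ α) := by
  simp only [f₂₁, Polynomial.map_add, Polynomial.map_mul, Polynomial.map_pow,
    Polynomial.map_X, Polynomial.map_C]
  simp only [map_add, map_sub, map_mul, map_neg, map_ofNat]

lemma A₂₁_eq {K : Type*} [Field K] (α : K) :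
    A₂₁ α = div₀ (MvPolynomial.X 0) (MvPolynomial.X 1)
      + MvPolynomial.C α * div₁ (MvPolynomial.X 0) (MvPolynomial.X 1) := by
  simp only [A₂₁, div₀, div₁, map_add, map_sub, map_mul, map_ofNat, map_one]
  ring

/-- `A₂₁` divides `f₂₁(x₁) − f₂₁^σ(x₂)` in `K[x₁,x₂]`, and moreover
`A₂₁(x₂,x₁) = −A₂₁^σ(x₁,x₂)`. -/
theorem A₂₁_dvd_and_swap
    {K : Type*} [Field K] [CharZero K] (α : K) (σ : K →+* K)
    (hα : α^2 - α + 2 = 0) (hσ : σ α = 1 - α) :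
    (A₂₁ α ∣
        Polynomial.aeval (MvPolynomial.X 0 : MvPolynomial (Fin 2) K) (f₂₁ α)
          - Polynomial.aeval (MvPolynomial.X 1 : MvPolynomial (Fin 2) K) ((f₂₁ α).map σ))
      ∧ MvPolynomial.rename (Equiv.swap (0 : Fin 2) 1) (A₂₁ α)
          = - MvPolynomial.map σ (A₂₁ α) := by
  constructor
  · have ha : (MvPolynomial.C α : MvPolynomial (Fin 2) K) ^ 2 - MvPolynomial.C α + 2 = 0 := by
      simpa only [map_add, map_sub, map_pow, map_ofNat, map_zero] using
        congrArg (MvPolynomial.C (σ := Fin 2)) hα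
    rw [map_f₂₁, hσ, aeval_f₂₁, aeval_f₂₁, A₂₁_eq, map_sub, map_one, MvPolynomial.algebraMap_eq,
      fact_combined _ _ _ ha]
    exact dvd_mul_right _ _
  · simp only [A₂₁, map_add, map_sub, map_mul, map_pow, map_ofNat, map_one,
      MvPolynomial.rename_X, MvPolynomial.rename_C, MvPolynomial.map_X, MvPolynomial.map_C,
      Equiv.swap_apply_left, Equiv.swap_apply_right, hσ]
    ring
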